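/- arXiv:0709.3541 — 6 statements merged into one kernel-verified Lean document; each statement's English description precedes it below -/
import Mathlib

section
/- Let D be a 2×2 real symmetric positive definite matrix, g ∈ ℝ² a vector with gᵀD⁻¹g ≥ 1, and P > 0. If S* is a 2×2 real positive semidefinite matrix with tr(S*) ≤ P that maximizes the function f(S) = log det(I + D S) − log(1 + gᵀ S g) over all positive semidefinite 2×2 matrices S with tr(S) ≤ P, then S* is not full rank, i.e., det S* = 0 (so S* has rank at most 1). -/
open Matrix

/-!
If `S` is nonsingular, it is an interior point of the positive semidefinite cone, so the gradient of
`f` at `S` is orthogonal to all symmetric matrices of trace zero, hence a multiple of the identity: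
`A⁻¹ - q⁻¹ g gᵀ = c I`, where `A = D⁻¹ + S` and `q = 1 + gᵀ S g`. In dimension at least two, `g gᵀ`
has a nontrivial kernel, and on it the positive definite `A⁻¹` acts as `c`; hence `c > 0`. Applying
`A` to `A⁻¹ g = (c + |g|² / q) g` then gives `gᵀ A g < q`, that is, `gᵀ D⁻¹ g < 1`.
-/

open scoped ComplexOrder Topology

variable {n : Type*}

section Finite

variable [Finite n]

lemma eventually_posDef_nhdsWithin_isHermitian {𝕜 : Type*} [RCLike 𝕜] {A : Matrix n n 𝕜}
    (hA : A.PosDef) : ∀ᶠ B in 𝓝[{B | B.IsHermitian}] A, B.PosDef := by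
  cases nonempty_fintype n
  have hsphere : ∀ᶠ B in 𝓝 A, ∀ x ∈ Metric.sphere (0 : n → 𝕜) 1,
      0 < RCLike.re (star x ⬝ᵥ B *ᵥ x) := by
    refine (isCompact_sphere 0 1).eventually_forall_of_forall_eventually fun x hx => ?_
    have hcont : Continuous fun z : Matrix n n 𝕜 × (n → 𝕜) =>
        RCLike.re (star z.2 ⬝ᵥ z.1 *ᵥ z.2) := by fun_prop
    exact hcont.continuousAt.eventually_const_lt
      (hA.re_dotProduct_pos (ne_zero_of_mem_unit_sphere ⟨x, hx⟩))
  filter_upwards [nhdsWithin_le_nhds hsphere, self_mem_nhdsWithin] with B hpos hB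
  refine .of_dotProduct_mulVec_pos hB fun x hx => ?_
  have hunit := hpos (‖x‖⁻¹ • x) (by simp [norm_smul, hx])
  rw [star_smul, mulVec_smul, smul_dotProduct, dotProduct_smul, star_trivial, RCLike.smul_re,
    RCLike.smul_re, ← mul_assoc] at hunit
  exact RCLike.pos_iff.mpr
    ⟨pos_of_mul_pos_right hunit (by positivity), hB.im_star_dotProduct_mulVec_self x⟩

lemma pos_of_sub_vecMulVec_eq_smul_one [DecidableEq n] [Nontrivial n]
    {B : Matrix n n ℝ} (hB : B.PosDef) {u v : n → ℝ} {c : ℝ}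
    (h : B - vecMulVec u v = c • 1) : 0 < c := by
  cases nonempty_fintype n
  obtain ⟨x, hx, hker⟩ := exists_mulVec_eq_zero_iff.mpr (det_vecMulVec u v)
  have hBx : B *ᵥ x = c • x := by
    rw [eq_add_of_sub_eq h, add_mulVec, hker, add_zero, smul_mulVec, one_mulVec]
  have hpos : 0 < x ⬝ᵥ B *ᵥ x := by simpa using hB.dotProduct_mulVec_pos hx
  rw [hBx, dotProduct_smul, smul_eq_mul] at hpos
  exact pos_of_mul_pos_left hpos (dotProduct_self_star_nonneg x)

end Finite

variable [Fintype n] [DecidableEq n]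

lemma hasDerivAt_det_one_add_smul {𝕜 : Type*} [NontriviallyNormedField 𝕜] (M : Matrix n n 𝕜) :
    HasDerivAt (fun t : 𝕜 => (1 + t • M).det) M.trace 0 := by
  have h := (det (1 + (Polynomial.X : Polynomial 𝕜) • M.map Polynomial.C)).hasDerivAt 0
  rw [derivative_det_one_add_X_smul] at h
  simpa [eval_det, ← smul_eq_mul_diagonal] using h

lemma hasDerivAt_det_add_smul {𝕜 : Type*} [NontriviallyNormedField 𝕜] {A : Matrix n n 𝕜}
    (hA : A.det ≠ 0) (H : Matrix n n 𝕜) :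
    HasDerivAt (fun t : 𝕜 => (A + t • H).det) (A.det * (A⁻¹ * H).trace) 0 := by
  have hfactor (t : 𝕜) : (A + t • H).det = A.det * (1 + t • (A⁻¹ * H)).det := by
    rw [← det_mul, mul_add, mul_one, mul_smul_comm, mul_nonsing_inv_cancel_left _ _ hA.isUnit]
  simpa only [hfactor] using (hasDerivAt_det_one_add_smul (A⁻¹ * H)).const_mul A.det

lemma exists_eq_smul_one_of_trace_mul_eq_zero {𝕜 : Type*} [RCLike 𝕜] {G : Matrix n n 𝕜}
    (hG : G.IsHermitian)
    (h : ∀ H : Matrix n n 𝕜, H.IsHermitian → H.trace = 0 → (G * H).trace = 0) :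
    ∃ c : 𝕜, G = c • 1 := by
  cases isEmpty_or_nonempty n
  · exact ⟨0, Subsingleton.elim _ _⟩
  set c : 𝕜 := G.trace / Fintype.card n with hc
  refine ⟨c, sub_eq_zero.mp ?_⟩
  set H := G - c • (1 : Matrix n n 𝕜) with hH
  have hH_herm : H.IsHermitian := by
    have hc_star : star c = c := by
      simp [hc, ← trace_conjTranspose, hG.eq]
    simp [hH, IsHermitian, hG.eq, hc_star]
  have hH_trace : H.trace = 0 := by simp [hH, hc]
  rw [← trace_conjTranspose_mul_self_eq_zero_iff, hH_herm.eq]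
  calc (H * H).trace = (G * H).trace - c * H.trace := by
        conv_lhs => enter [1, 1]; rw [hH]
        simp [sub_mul]
    _ = 0 := by rw [h H hH_herm hH_trace, hH_trace, mul_zero, sub_zero]

lemma dotProduct_mulVec_lt_of_inv_sub_eq_smul_one [Nontrivial n] {A : Matrix n n ℝ}
    (hA : A.PosDef) {g : n → ℝ} {q c : ℝ} (hq : 0 < q)
    (h : A⁻¹ - q⁻¹ • vecMulVec g g = c • 1) : g ⬝ᵥ A *ᵥ g < q := by
  have hc : 0 < c :=
    pos_of_sub_vecMulVec_eq_smul_one hA.inv (by rwa [← smul_vecMulVec] at h)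
  have hAinv : A⁻¹ *ᵥ g = (c + q⁻¹ * (g ⬝ᵥ g)) • g := by
    rw [eq_add_of_sub_eq h, add_mulVec, smul_mulVec, one_mulVec, smul_mulVec, vecMulVec_mulVec]
    ext i
    simp only [Pi.add_apply, Pi.smul_apply, op_smul_eq_smul, smul_eq_mul]
    ring
  have hgg : g ⬝ᵥ g = (c + q⁻¹ * (g ⬝ᵥ g)) * (g ⬝ᵥ A *ᵥ g) := by
    have := congrArg (fun x => g ⬝ᵥ A *ᵥ x) hAinv
    simpa [mulVec_mulVec, mul_nonsing_inv _ hA.det_pos.ne'.isUnit, mulVec_smul] using this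
  by_contra! hqA
  have hnorm : 0 ≤ g ⬝ᵥ g := dotProduct_self_star_nonneg g
  have : g ⬝ᵥ g < g ⬝ᵥ g :=
    calc g ⬝ᵥ g < c * q + g ⬝ᵥ g := lt_add_of_pos_left _ (mul_pos hc hq)
      _ = (c + q⁻¹ * (g ⬝ᵥ g)) * q := by field_simp
      _ ≤ (c + q⁻¹ * (g ⬝ᵥ g)) * (g ⬝ᵥ A *ᵥ g) := by gcongr
      _ = g ⬝ᵥ g := hgg.symm
  exact this.false

variable {D S : Matrix n n ℝ} {g : n → ℝ}

/-- The objective `f(T) = log det(I + D T) - log(1 + gᵀ T g)`. -/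
noncomputable def objective (D : Matrix n n ℝ) (g : n → ℝ) (T : Matrix n n ℝ) : ℝ :=
  Real.log ((1 + D * T).det) - Real.log (1 + g ⬝ᵥ T *ᵥ g)

/-- For invertible `D`, the gradient of `objective D g` at `T` for the inner product `tr (G H)` on
symmetric matrices; the first term is `(I + D T)⁻¹ D`, in a form that is visibly symmetric. -/
noncomputable def objectiveGradient (D : Matrix n n ℝ) (g : n → ℝ) (T : Matrix n n ℝ) :
    Matrix n n ℝ :=
  (D⁻¹ + T)⁻¹ - (1 + g ⬝ᵥ T *ᵥ g)⁻¹ • vecMulVec g g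

lemma isHermitian_objectiveGradient (hD : D.IsHermitian) (hS : S.IsHermitian) :
    (objectiveGradient D g S).IsHermitian := by
  refine (hD.inv.add hS).inv.sub ?_
  simp [IsHermitian]

lemma hasDerivAt_log_det_one_add_mul (hD : D.det ≠ 0) (hDS : (D⁻¹ + S).det ≠ 0)
    (H : Matrix n n ℝ) :
    HasDerivAt (fun t : ℝ => Real.log (1 + D * (S + t • H)).det)
      (((D⁻¹ + S)⁻¹ * H).trace) 0 := by
  have hfactor (t : ℝ) : (1 + D * (S + t • H)).det = D.det * (D⁻¹ + S + t • H).det := by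
    rw [← det_mul, add_assoc, mul_add D D⁻¹, mul_nonsing_inv _ hD.isUnit]
  simp_rw [hfactor]
  refine (((hasDerivAt_det_add_smul hDS H).const_mul D.det).log (by simp [hD, hDS])).congr_deriv ?_
  rw [zero_smul, add_zero]
  field_simp

lemma hasDerivAt_objective (hD : D.det ≠ 0) (hDS : (D⁻¹ + S).det ≠ 0)
    (hq : 1 + g ⬝ᵥ S *ᵥ g ≠ 0) (H : Matrix n n ℝ) :
    HasDerivAt (fun t : ℝ => objective D g (S + t • H)) (objectiveGradient D g S * H).trace 0 := by
  have hquad : HasDerivAt (fun t : ℝ => 1 + g ⬝ᵥ (S + t • H) *ᵥ g) (g ⬝ᵥ H *ᵥ g) 0 := by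
    simpa [add_mulVec, smul_mulVec, ← add_assoc] using
      ((hasDerivAt_id (0 : ℝ)).mul_const (g ⬝ᵥ H *ᵥ g)).const_add (1 + g ⬝ᵥ S *ᵥ g)
  refine ((hasDerivAt_log_det_one_add_mul hD hDS H).sub
    (hquad.log (by simpa using hq))).congr_deriv ?_
  have htrace : (vecMulVec g g * H).trace = g ⬝ᵥ H *ᵥ g := by
    rw [vecMulVec_mul, trace_vecMulVec, dotProduct_comm, dotProduct_mulVec]
  simp [objectiveGradient, sub_mul, htrace, div_eq_inv_mul]

lemma trace_objectiveGradient_mul_eq_zero_of_isMaxOn {P : ℝ} (hD : D.PosDef) (hS : S.PosDef)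
    (htr : S.trace ≤ P) (hmax : IsMaxOn (objective D g) {T | T.PosSemidef ∧ T.trace ≤ P} S)
    {H : Matrix n n ℝ} (hH : H.IsHermitian) (hH_trace : H.trace = 0) :
    (objectiveGradient D g S * H).trace = 0 := by
  have hline : Filter.Tendsto (fun t : ℝ => S + t • H) (𝓝 0) (𝓝[{B | B.IsHermitian}] S) := by
    refine tendsto_nhdsWithin_iff.mpr ⟨?_, .of_forall fun t => hS.isHermitian.add ?_⟩
    · exact Continuous.tendsto' (by fun_prop) _ _ (by simp)
    · exact hH.smul (.all t)
  have hlocal : IsLocalMax (fun t : ℝ => objective D g (S + t • H)) 0 := by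
    filter_upwards [hline (eventually_posDef_nhdsWithin_isHermitian hS)] with t ht
    simpa using hmax ⟨PosDef.posSemidef ht, by simpa [hH_trace] using htr⟩
  have hq : 0 ≤ g ⬝ᵥ S *ᵥ g := by simpa using hS.posSemidef.dotProduct_mulVec_nonneg g
  exact hlocal.hasDerivAt_eq_zero
    (hasDerivAt_objective hD.det_pos.ne' (hD.inv.add hS).det_pos.ne' (by positivity) H)

theorem stmt0_general [Nontrivial n] {P : ℝ} (hD : D.PosDef) (hg : 1 ≤ g ⬝ᵥ D⁻¹ *ᵥ g)
    (hS : S.PosSemidef) (htr : S.trace ≤ P)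
    (hmax : IsMaxOn (objective D g) {T | T.PosSemidef ∧ T.trace ≤ P} S) : S.det = 0 := by
  by_contra hdet
  have hS' : S.PosDef := hS.posDef_iff_det_ne_zero.mpr hdet
  obtain ⟨c, hc⟩ : ∃ c : ℝ, objectiveGradient D g S = c • 1 :=
    exists_eq_smul_one_of_trace_mul_eq_zero
      (isHermitian_objectiveGradient hD.isHermitian hS.isHermitian)
      fun _ => trace_objectiveGradient_mul_eq_zero_of_isMaxOn hD hS' htr hmax
  have hq : 0 ≤ g ⬝ᵥ S *ᵥ g := by simpa using hS.dotProduct_mulVec_nonneg g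
  have hlt : g ⬝ᵥ (D⁻¹ + S) *ᵥ g < 1 + g ⬝ᵥ S *ᵥ g :=
    dotProduct_mulVec_lt_of_inv_sub_eq_smul_one (hD.inv.add hS') (by positivity) hc
  rw [add_mulVec, dotProduct_add] at hlt
  linarith

/-- If `D` is a 2×2 real symmetric positive definite matrix, `g ∈ ℝ²` satisfies
`gᵀ D⁻¹ g ≥ 1`, `P > 0`, and `S` is a positive semidefinite matrix with `tr S ≤ P`
maximizing `f(T) = log det(I + D T) − log(1 + gᵀ T g)` over all positive semidefinite
matrices with trace at most `P`, then `S` is not full rank, i.e. `det S = 0`. -/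
theorem stmt0 (D S : Matrix (Fin 2) (Fin 2) ℝ) (g : Fin 2 → ℝ) (P : ℝ)
    (hD : D.PosDef) (hg : 1 ≤ g ⬝ᵥ D⁻¹.mulVec g) (hP : 0 < P)
    (hS : S.PosSemidef) (htr : S.trace ≤ P)
    (hmax : ∀ T : Matrix (Fin 2) (Fin 2) ℝ, T.PosSemidef → T.trace ≤ P →
      Real.log ((1 + D * T).det) - Real.log (1 + g ⬝ᵥ T.mulVec g) ≤
        Real.log ((1 + D * S).det) - Real.log (1 + g ⬝ᵥ S.mulVec g)) :
    S.det = 0 :=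
  stmt0_general hD hg hS htr fun T hT => hmax T hT.1 hT.2
end

section
/- Let H be an invertible 2×2 real matrix, g ∈ ℝ² a nonzero vector, and P > 0. Let λ₁ be the largest eigenvalue of (I + P·g gᵀ)^{-1/2} (I + P·HᵀH) (I + P·g gᵀ)^{-1/2}, and let g⊥ ∈ ℝ² be any unit vector with gᵀ g⊥ = 0. Then λ₁ ≥ 1 + P·‖H g⊥‖², and in particular λ₁ > 1. -/
open Matrix

/-!
If `c` bounds the eigenvalues of `(R⁻¹)ᴴ A R⁻¹`, then `c - (R⁻¹)ᴴ A R⁻¹` is positive semidefinite,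
and conjugating by `R` turns this into `A ≤ c RᴴR` in the Loewner order. For `RᴴR = 1 + P g gᴴ` and
`A = 1 + P HᴴH`, test this on a unit vector `x` orthogonal to `g`: the rank-one term vanishes there,
so the two quadratic forms are `1` and `1 + P ‖H x‖²`.
-/

section

variable {S α m n : Type*} [Fintype n] [DecidableEq n] [Semiring α] [DistribSMul S α]
  [IsScalarTower S α α]

lemma one_add_smul_vecMulVec_mulVec_of_dotProduct_eq_zero (c : S) (u : n → α) {w x : n → α}
    (h : w ⬝ᵥ x = 0) :
    (1 + c • vecMulVec u w) *ᵥ x = x := by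
  simp [add_mulVec, smul_mulVec, vecMulVec_mulVec, h]

lemma star_dotProduct_one_add_smul_conjTranspose_mul_self_mulVec [StarRing α] [SMulCommClass S α α]
    [Fintype m] (H : Matrix m n α) (c : S) (x : n → α) :
    star x ⬝ᵥ (1 + c • (Hᴴ * H)) *ᵥ x = star x ⬝ᵥ x + c • (star (H *ᵥ x) ⬝ᵥ H *ᵥ x) := by
  rw [add_mulVec, one_mulVec, smul_mulVec, dotProduct_add, dotProduct_smul, ← mulVec_mulVec,
    dotProduct_mulVec, ← star_mulVec]

end

section

open scoped ComplexOrder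

variable {𝕜 m n : Type*} [RCLike 𝕜] [Fintype n]

lemma re_star_dotProduct_mulVec_le_of_posSemidef_smul_sub {A B : Matrix n n 𝕜} {c : ℝ}
    (h : (c • B - A).PosSemidef) (x : n → 𝕜) :
    RCLike.re (star x ⬝ᵥ A *ᵥ x) ≤ c * RCLike.re (star x ⬝ᵥ B *ᵥ x) := by
  have hnonneg := h.re_dotProduct_nonneg x
  rwa [sub_mulVec, smul_mulVec, dotProduct_sub, dotProduct_smul, map_sub, RCLike.smul_re,
    sub_nonneg] at hnonneg

variable [DecidableEq n]

lemma posSemidef_smul_one_sub_of_mem_upperBounds_eigenvalues {M : Matrix n n 𝕜} (hM : M.IsHermitian)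
    {c : ℝ} (hc : c ∈ upperBounds {μ : ℝ | ∃ v : n → 𝕜, v ≠ 0 ∧ M *ᵥ v = μ • v}) :
    (c • (1 : Matrix n n 𝕜) - M).PosSemidef := by
  have hN : (c • (1 : Matrix n n 𝕜) - M).IsHermitian :=
    (isHermitian_one.smul (IsSelfAdjoint.all c)).sub hM
  refine hN.posSemidef_iff_eigenvalues_nonneg.mpr fun i ↦ ?_
  have hne : (hN.eigenvectorBasis i).ofLp ≠ 0 := by
    simpa using hN.eigenvectorBasis.orthonormal.ne_zero i
  have heig := hN.mulVec_eigenvectorBasis i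
  rw [sub_mulVec, smul_mulVec, one_mulVec] at heig
  have hle : c - hN.eigenvalues i ≤ c :=
    hc ⟨_, hne, by rw [sub_smul, ← heig, sub_sub_cancel]⟩
  simpa using hle

lemma posSemidef_smul_conjTranspose_mul_self_sub_of_mem_upperBounds_eigenvalues
    {A R : Matrix n n 𝕜} (hA : A.IsHermitian) (hR : IsUnit R) {c : ℝ}
    (hc : c ∈ upperBounds {μ : ℝ | ∃ v : n → 𝕜, v ≠ 0 ∧ ((R⁻¹)ᴴ * A * R⁻¹) *ᵥ v = μ • v}) :
    (c • (Rᴴ * R) - A).PosSemidef := by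
  have hpsd := posSemidef_smul_one_sub_of_mem_upperBounds_eigenvalues
    (isHermitian_conjTranspose_mul_mul R⁻¹ hA) hc
  have hinv : R⁻¹ * R = 1 := nonsing_inv_mul R ((isUnit_iff_isUnit_det R).mp hR)
  have hinv' : Rᴴ * (R⁻¹)ᴴ = 1 := by rw [← conjTranspose_mul, hinv, conjTranspose_one]
  have hconj : Rᴴ * (c • 1 - (R⁻¹)ᴴ * A * R⁻¹) * R = c • (Rᴴ * R) - A := by
    calc Rᴴ * (c • 1 - (R⁻¹)ᴴ * A * R⁻¹) * R
        = c • (Rᴴ * R) - (Rᴴ * (R⁻¹)ᴴ) * A * (R⁻¹ * R) := by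
          simp only [mul_sub, sub_mul, mul_smul_comm, smul_mul_assoc, mul_one, Matrix.mul_assoc]
      _ = c • (Rᴴ * R) - A := by rw [hinv, hinv', one_mul, mul_one]
  exact hconj ▸ hpsd.conjTranspose_mul_mul_same R

theorem stmt4_general [Fintype m] (H : Matrix m n 𝕜) (R : Matrix n n 𝕜) (g gp : n → 𝕜) (P lam1 : ℝ)
    (hR : IsUnit R) (hRB : Rᴴ * R = 1 + P • vecMulVec g (star g))
    (hlam : lam1 ∈ upperBounds {μ : ℝ | ∃ v : n → 𝕜, v ≠ 0 ∧
      ((R⁻¹)ᴴ * (1 + P • (Hᴴ * H)) * R⁻¹) *ᵥ v = μ • v})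
    (hgp : star gp ⬝ᵥ gp = 1) (horth : star g ⬝ᵥ gp = 0) :
    1 + P * RCLike.re (star (H *ᵥ gp) ⬝ᵥ H *ᵥ gp) ≤ lam1 ∧
      (0 < P → H *ᵥ gp ≠ 0 → 1 < lam1) := by
  have hA : (1 + P • (Hᴴ * H)).IsHermitian :=
    isHermitian_one.add ((isHermitian_conjTranspose_mul_self H).smul (IsSelfAdjoint.all P))
  have hloewner :=
    posSemidef_smul_conjTranspose_mul_self_sub_of_mem_upperBounds_eigenvalues hA hR hlam
  have hle : 1 + P * RCLike.re (star (H *ᵥ gp) ⬝ᵥ H *ᵥ gp) ≤ lam1 := by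
    simpa [hRB, one_add_smul_vecMulVec_mulVec_of_dotProduct_eq_zero P g horth, hgp, RCLike.smul_re,
      star_dotProduct_one_add_smul_conjTranspose_mul_self_mulVec]
      using re_star_dotProduct_mulVec_le_of_posSemidef_smul_sub hloewner gp
  refine ⟨hle, fun hP hne ↦ ?_⟩
  have hpos : 0 < RCLike.re (star (H *ᵥ gp) ⬝ᵥ H *ᵥ gp) :=
    (RCLike.pos_iff.mp (dotProduct_star_self_pos_iff.mpr hne)).1
  linarith [mul_pos hP hpos]

end

/-- Let `H` be invertible 2×2, `g ≠ 0`, `P > 0`, let `R` be the symmetric positive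
definite square root of `B = I + P g gᵀ`, and let `λ₁` be the largest eigenvalue of
`R⁻¹ (I + P HᵀH) R⁻¹ = B^{-1/2}(I + P HᵀH)B^{-1/2}`. If `g⊥` is a unit vector
orthogonal to `g`, then `λ₁ ≥ 1 + P ‖H g⊥‖²` and in particular `λ₁ > 1`. -/
theorem stmt4 (H R : Matrix (Fin 2) (Fin 2) ℝ) (g gp : Fin 2 → ℝ) (P lam1 : ℝ)
    (hH : IsUnit H.det) (hg : g ≠ 0) (hP : 0 < P)
    (hR : R.PosDef) (hRB : R * R = 1 + P • vecMulVec g g)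
    (hlam : IsGreatest {μ : ℝ | ∃ v : Fin 2 → ℝ, v ≠ 0 ∧
      (R⁻¹ * (1 + P • (Hᵀ * H)) * R⁻¹).mulVec v = μ • v} lam1)
    (hgp : gp ⬝ᵥ gp = 1) (horth : g ⬝ᵥ gp = 0) :
    1 + P * (H.mulVec gp ⬝ᵥ H.mulVec gp) ≤ lam1 ∧ 1 < lam1 := by
  have hHgp : H *ᵥ gp ≠ 0 := fun h ↦ by
    simp [eq_zero_of_mulVec_eq_zero hH.ne_zero h] at hgp
  have hRt : Rᵀ = R := hR.isHermitian.eq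
  exact (stmt4_general H R g gp P lam1 hR.isUnit (by simpa [hRt] using hRB)
    (by simpa [transpose_nonsing_inv, hRt] using hlam.2) hgp horth).imp_right fun h ↦ h hP hHgp
end

section
/- Let H be an invertible 2×2 real matrix, g ∈ ℝ² with gᵀ(HᵀH)⁻¹g > 1, and v ∈ ℝ² with gᵀ(HᵀH)⁻¹v ≠ 0. For a real number α ≠ 0 define f(α) = (1 − ‖H^{-T}(α v + g)‖²) / α². Then f(α) = −vᵀ(HᵀH)⁻¹v − (2/α)·gᵀ(HᵀH)⁻¹v − (1/α²)·(gᵀ(HᵀH)⁻¹g − 1), and the value α* determined by 1/α* = gᵀ(HᵀH)⁻¹v / (1 − gᵀ(HᵀH)⁻¹g) satisfies α* ≠ 0 and f(α) ≤ f(α*) for every real α ≠ 0. -/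
/-!
Since `(HᵀH)⁻¹ = H⁻¹H^{-T}`, the form `xᵀ(HᵀH)⁻¹y` is the dot product of `H^{-T}x` and `H^{-T}y`, so
everything is a statement about the two vectors `H^{-T}v` and `H^{-T}g`. Expanding the square shows
that `f(α)` is a quadratic polynomial in `1/α` with leading coefficient `1 - gᵀ(HᵀH)⁻¹g < 0`. It is
therefore largest at its vertex, which is `1/α*`.
-/

open Matrix

lemma quadratic_le_of_vertex {R : Type*} [CommRing R] [LinearOrder R] [IsOrderedRing R]
    {a b s : R} (c t : R) (ha : a ≤ 0) (hs : 2 * a * s + b = 0) :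
    a * t ^ 2 + b * t + c ≤ a * s ^ 2 + b * s + c := by
  have hsq : a * (t - s) ^ 2 ≤ 0 := mul_nonpos_of_nonpos_of_nonneg ha (sq_nonneg _)
  linear_combination hsq + (t - s) * hs

section

variable {n R K : Type*} [Fintype n] [Field K]

lemma dotProduct_inv_transpose_mul_self_mulVec [CommRing R] [DecidableEq n]
    (A : Matrix n n R) (x y : n → R) :
    x ⬝ᵥ (Aᵀ * A)⁻¹ *ᵥ y = (Aᵀ)⁻¹ *ᵥ x ⬝ᵥ (Aᵀ)⁻¹ *ᵥ y := by
  rw [Matrix.mul_inv_rev, ← mulVec_mulVec, dotProduct_mulVec, ← transpose_nonsing_inv,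
    mulVec_transpose, mulVec_transpose]

lemma smul_add_dotProduct_self [CommSemiring R] (r : R) (x y : n → R) :
    (r • x + y) ⬝ᵥ (r • x + y) = r ^ 2 * (x ⬝ᵥ x) + 2 * r * (y ⬝ᵥ x) + y ⬝ᵥ y := by
  simp only [add_dotProduct, dotProduct_add, smul_dotProduct, dotProduct_smul, smul_eq_mul,
    dotProduct_comm x y]
  ring

lemma one_sub_smul_add_dotProduct_self_div_sq {r : K} (hr : r ≠ 0) (x y : n → K) :
    (1 - (r • x + y) ⬝ᵥ (r • x + y)) / r ^ 2 =
      -(x ⬝ᵥ x) - (2 / r) * (y ⬝ᵥ x) - (1 / r ^ 2) * (y ⬝ᵥ y - 1) := by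
  rw [smul_add_dotProduct_self]
  field_simp
  ring

variable [LinearOrder K] [IsStrictOrderedRing K]

lemma one_sub_smul_add_dotProduct_self_div_sq_le {r s : K} {x y : n → K} (hr : r ≠ 0) (hs : s ≠ 0)
    (hy : 1 ≤ y ⬝ᵥ y) (hvertex : 1 / s * (1 - y ⬝ᵥ y) = y ⬝ᵥ x) :
    (1 - (r • x + y) ⬝ᵥ (r • x + y)) / r ^ 2 ≤ (1 - (s • x + y) ⬝ᵥ (s • x + y)) / s ^ 2 := by
  rw [one_sub_smul_add_dotProduct_self_div_sq hr, one_sub_smul_add_dotProduct_self_div_sq hs]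
  have hslope : 2 * (1 - y ⬝ᵥ y) * (1 / s) + -2 * (y ⬝ᵥ x) = 0 := by
    linear_combination 2 * hvertex
  linear_combination quadratic_le_of_vertex (-(x ⬝ᵥ x)) (1 / r) (sub_nonpos.mpr hy) hslope

theorem stmt5_general [DecidableEq n] (H : Matrix n n K) (g v : n → K) (alphas : K)
    (hg : 1 < g ⬝ᵥ (Hᵀ * H)⁻¹ *ᵥ g)
    (hv : g ⬝ᵥ (Hᵀ * H)⁻¹ *ᵥ v ≠ 0)
    (halphas : 1 / alphas = (g ⬝ᵥ (Hᵀ * H)⁻¹ *ᵥ v) / (1 - g ⬝ᵥ (Hᵀ * H)⁻¹ *ᵥ g)) :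
    let f : K → K := fun α =>
      (1 - ((Hᵀ)⁻¹ *ᵥ (α • v + g) ⬝ᵥ (Hᵀ)⁻¹ *ᵥ (α • v + g))) / α ^ 2
    (∀ α : K, α ≠ 0 →
        f α = -(v ⬝ᵥ (Hᵀ * H)⁻¹ *ᵥ v)
          - (2 / α) * (g ⬝ᵥ (Hᵀ * H)⁻¹ *ᵥ v)
          - (1 / α ^ 2) * (g ⬝ᵥ (Hᵀ * H)⁻¹ *ᵥ g - 1))
    ∧ alphas ≠ 0
    ∧ ∀ α : K, α ≠ 0 → f α ≤ f alphas := by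
  simp only [dotProduct_inv_transpose_mul_self_mulVec, mulVec_add, mulVec_smul]
    at hg hv halphas ⊢
  have hden : 1 - (Hᵀ)⁻¹ *ᵥ g ⬝ᵥ (Hᵀ)⁻¹ *ᵥ g ≠ 0 := (sub_neg.mpr hg).ne
  have hne : alphas ≠ 0 := ne_zero_of_one_div_ne_zero (halphas ▸ div_ne_zero hv hden)
  exact ⟨fun α hα => one_sub_smul_add_dotProduct_self_div_sq hα _ _, hne, fun α hα =>
    one_sub_smul_add_dotProduct_self_div_sq_le hα hne hg.le ((eq_div_iff hden).mp halphas)⟩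

end

/-- Let `H` be invertible 2×2, `g` with `gᵀ(HᵀH)⁻¹g > 1`, and `v` with
`gᵀ(HᵀH)⁻¹v ≠ 0`. For `α ≠ 0` put `f(α) = (1 − ‖H^{-T}(α v + g)‖²)/α²`. Then
`f(α) = −vᵀ(HᵀH)⁻¹v − (2/α) gᵀ(HᵀH)⁻¹v − (1/α²)(gᵀ(HᵀH)⁻¹g − 1)`, and the `α*`
with `1/α* = gᵀ(HᵀH)⁻¹v / (1 − gᵀ(HᵀH)⁻¹g)` is nonzero and maximizes `f` over
all nonzero `α`. -/
theorem stmt5 (H : Matrix (Fin 2) (Fin 2) ℝ) (g v : Fin 2 → ℝ) (alphas : ℝ)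
    (hH : IsUnit H.det)
    (hg : 1 < g ⬝ᵥ (Hᵀ * H)⁻¹.mulVec g)
    (hv : g ⬝ᵥ (Hᵀ * H)⁻¹.mulVec v ≠ 0)
    (halphas : 1 / alphas =
      (g ⬝ᵥ (Hᵀ * H)⁻¹.mulVec v) / (1 - g ⬝ᵥ (Hᵀ * H)⁻¹.mulVec g)) :
    let f : ℝ → ℝ := fun α =>
      (1 - ((Hᵀ)⁻¹.mulVec (α • v + g) ⬝ᵥ (Hᵀ)⁻¹.mulVec (α • v + g))) / α ^ 2
    (∀ α : ℝ, α ≠ 0 →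
        f α = -(v ⬝ᵥ (Hᵀ * H)⁻¹.mulVec v)
          - (2 / α) * (g ⬝ᵥ (Hᵀ * H)⁻¹.mulVec v)
          - (1 / α ^ 2) * (g ⬝ᵥ (Hᵀ * H)⁻¹.mulVec g - 1))
    ∧ alphas ≠ 0
    ∧ ∀ α : ℝ, α ≠ 0 → f α ≤ f alphas :=
  stmt5_general H g v alphas hg hv halphas
end

section
/- Let H be an invertible 2×2 real matrix and g ∈ ℝ² with gᵀ(HᵀH)⁻¹g > 1. Let q ∈ ℝ² be a unit vector satisfying ‖H q‖ > |gᵀ q|, and let q⊥ ∈ ℝ² be a unit vector with qᵀ q⊥ = 0. Then (q⊥)ᵀ (HᵀH − g gᵀ)⁻¹ q⊥ < 0 (the matrix HᵀH − g gᵀ being invertible under the stated hypothesis). -/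
open Matrix

/-!
Write `M = HᵀH - g gᵀ`. By the matrix determinant lemma
`det M = det (HᵀH) (1 - gᵀ (HᵀH)⁻¹ g) < 0`. In dimension two the adjugate of `M` is `Mᵀ` conjugated
by the quarter turn, and the quarter turn maps `q⊥` to `± q`. Hence
`(q⊥)ᵀ (adj M) q⊥ = qᵀ M q = ‖H q‖² - (gᵀ q)² > 0`, and dividing by `det M` gives the sign of
`(q⊥)ᵀ M⁻¹ q⊥`.
-/

section RankOneUpdate

variable {n R : Type*} [Fintype n] [CommRing R]

lemma det_sub_vecMulVec [DecidableEq n] {A : Matrix n n R} (hA : IsUnit A.det) (u v : n → R) :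
    (A - vecMulVec u v).det = A.det * (1 - v ⬝ᵥ A⁻¹ *ᵥ u) := by
  have hscalar : (1 + replicateRow Unit v * A⁻¹ * replicateCol Unit (-u)).det =
      1 - v ⬝ᵥ A⁻¹ *ᵥ u := by
    rw [det_unique, Matrix.add_apply, one_apply_eq, Matrix.mul_assoc, ← replicateCol_mulVec,
      replicateRow_mul_replicateCol_apply, mulVec_neg, dotProduct_neg, ← sub_eq_add_neg]
  rw [sub_eq_add_neg, ← neg_vecMulVec, vecMulVec_eq Unit,
    det_add_replicateCol_mul_replicateRow hA, hscalar]

lemma dotProduct_sub_vecMulVec_mulVec (A : Matrix n n R) (u v x : n → R) :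
    x ⬝ᵥ (A - vecMulVec u v) *ᵥ x = x ⬝ᵥ A *ᵥ x - (u ⬝ᵥ x) * (v ⬝ᵥ x) := by
  rw [sub_mulVec, vecMulVec_mulVec, dotProduct_sub, op_smul_eq_smul, dotProduct_smul, smul_eq_mul,
    dotProduct_comm x u, mul_comm (v ⬝ᵥ x)]

end RankOneUpdate

lemma dotProduct_transpose_mul_self_mulVec {m n R : Type*} [Fintype m] [Fintype n]
    [CommSemiring R] (B : Matrix m n R) (x : n → R) :
    x ⬝ᵥ (Bᵀ * B) *ᵥ x = B *ᵥ x ⬝ᵥ B *ᵥ x := by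
  rw [← mulVec_mulVec, dotProduct_mulVec, vecMul_transpose]

lemma dotProduct_inv_mulVec {n K : Type*} [Fintype n] [DecidableEq n] [Field K]
    (A : Matrix n n K) (x y : n → K) :
    x ⬝ᵥ A⁻¹ *ᵥ y = x ⬝ᵥ A.adjugate *ᵥ y / A.det := by
  rw [inv_def, Ring.inverse_eq_inv', smul_mulVec, dotProduct_smul, smul_eq_mul, inv_mul_eq_div]

/-- Orthogonality identifies `p` with a multiple of the quarter turn of `q`; the factors `q ⬝ᵥ q`
and `p ⬝ᵥ p` compensate for the unknown multiple. -/
lemma dotProduct_self_mul_dotProduct_adjugate_mulVec {R : Type*} [CommRing R]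
    (A : Matrix (Fin 2) (Fin 2) R) {q p : Fin 2 → R} (hqp : q ⬝ᵥ p = 0) :
    q ⬝ᵥ q * (p ⬝ᵥ A.adjugate *ᵥ p) = p ⬝ᵥ p * (q ⬝ᵥ A *ᵥ q) := by
  simp only [adjugate_fin_two, dotProduct, mulVec, Fin.sum_univ_two, of_apply, cons_val_zero,
    cons_val_one, cons_val_fin_one] at hqp ⊢
  linear_combination ((A 0 0 - A 1 1) * (q 1 * p 1 - q 0 * p 0) -
    (A 0 1 + A 1 0) * (q 0 * p 1 + q 1 * p 0)) * hqp

lemma dotProduct_self_pos {n R : Type*} [Fintype n] [Ring R] [LinearOrder R]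
    [IsStrictOrderedRing R] {x : n → R} (hx : x ≠ 0) : 0 < x ⬝ᵥ x :=
  (Finset.sum_nonneg fun i _ ↦ mul_self_nonneg (x i)).lt_of_ne'
    (dotProduct_self_eq_zero.not.mpr hx)

section OrderedField

variable {K : Type*} [Field K] [LinearOrder K] [IsStrictOrderedRing K]

lemma dotProduct_adjugate_mulVec_pos {A : Matrix (Fin 2) (Fin 2) K} {q p : Fin 2 → K}
    (hq : 0 < q ⬝ᵥ A *ᵥ q) (hp : p ≠ 0) (hqp : q ⬝ᵥ p = 0) :
    0 < p ⬝ᵥ A.adjugate *ᵥ p := by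
  have hq0 : q ≠ 0 := by
    rintro rfl
    simp at hq
  have hprod : 0 < q ⬝ᵥ q * (p ⬝ᵥ A.adjugate *ᵥ p) := by
    rw [dotProduct_self_mul_dotProduct_adjugate_mulVec A hqp]
    exact mul_pos (dotProduct_self_pos hp) hq
  exact pos_of_mul_pos_right hprod (dotProduct_self_pos hq0).le

lemma det_sub_vecMulVec_neg {n : Type*} [Fintype n] [DecidableEq n] {A : Matrix n n K}
    {u v : n → K} (hA : 0 < A.det) (huv : 1 < v ⬝ᵥ A⁻¹ *ᵥ u) :
    (A - vecMulVec u v).det < 0 := by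
  rw [det_sub_vecMulVec hA.ne'.isUnit]
  exact mul_neg_of_pos_of_neg hA (sub_neg.mpr huv)

theorem stmt7_general {A : Matrix (Fin 2) (Fin 2) K} {u v q p : Fin 2 → K}
    (hA : 0 < A.det) (huv : 1 < v ⬝ᵥ A⁻¹ *ᵥ u)
    (hq : (u ⬝ᵥ q) * (v ⬝ᵥ q) < q ⬝ᵥ A *ᵥ q) (hp : p ≠ 0) (hqp : q ⬝ᵥ p = 0) :
    p ⬝ᵥ (A - vecMulVec u v)⁻¹ *ᵥ p < 0 := by
  have hform : 0 < q ⬝ᵥ (A - vecMulVec u v) *ᵥ q := by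
    rw [dotProduct_sub_vecMulVec_mulVec]
    exact sub_pos.mpr hq
  rw [dotProduct_inv_mulVec]
  exact div_neg_of_pos_of_neg (dotProduct_adjugate_mulVec_pos hform hp hqp)
    (det_sub_vecMulVec_neg hA huv)

lemma det_transpose_mul_self_pos {n : Type*} [Fintype n] [DecidableEq n] {B : Matrix n n K}
    (hB : IsUnit B.det) : 0 < (Bᵀ * B).det := by
  rw [det_mul, det_transpose]
  exact mul_self_pos.mpr hB.ne_zero

end OrderedField

lemma mul_self_lt_of_abs_lt_sqrt {x y : ℝ} (h : |x| < √y) : x * x < y := by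
  rw [← abs_mul_abs_self, ← sq]
  exact (Real.lt_sqrt (abs_nonneg x)).mp h

/-- Let `H` be invertible 2×2 and `g` with `gᵀ(HᵀH)⁻¹g > 1`. If `q` is a unit
vector with `‖H q‖ > |gᵀ q|` and `q⊥` is a unit vector orthogonal to `q`, then
`(q⊥)ᵀ (HᵀH − g gᵀ)⁻¹ q⊥ < 0`. -/
theorem stmt7 (H : Matrix (Fin 2) (Fin 2) ℝ) (g q qp : Fin 2 → ℝ)
    (hH : IsUnit H.det) (hg : 1 < g ⬝ᵥ (Hᵀ * H)⁻¹.mulVec g)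
    (hq : q ⬝ᵥ q = 1)
    (hHq : |g ⬝ᵥ q| < Real.sqrt (H.mulVec q ⬝ᵥ H.mulVec q))
    (hqp : qp ⬝ᵥ qp = 1) (horth : q ⬝ᵥ qp = 0) :
    qp ⬝ᵥ (Hᵀ * H - vecMulVec g g)⁻¹.mulVec qp < 0 := by
  rw [← dotProduct_transpose_mul_self_mulVec] at hHq
  exact stmt7_general (det_transpose_mul_self_pos hH) hg (mul_self_lt_of_abs_lt_sqrt hHq)
    (fun h ↦ by simp [h] at hqp) horth
end

section
/- Let H be an invertible 2×2 real matrix and g ∈ ℝ² with gᵀ(HᵀH)⁻¹g > 1 (so that HᵀH − g gᵀ is invertible). Let q⊥ ∈ ℝ² be a nonzero vector with (q⊥)ᵀ(HᵀH − g gᵀ)⁻¹ q⊥ < 0, and set θ = −1 / ((q⊥)ᵀ(HᵀH − g gᵀ)⁻¹ q⊥) > 0. Then the matrix A = HᵀH + θ·q⊥ (q⊥)ᵀ is (symmetric positive definite, hence) invertible and gᵀ A⁻¹ g = 1. -/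
open Matrix

/-!
Write `M = HᵀH`, `B = M - g gᵀ` and `w = B⁻¹ q`. The choice of `θ` makes `(B + θ q qᵀ) w = 0`, so
`A w = (B + θ q qᵀ) w + (gᵀ w) g = (gᵀ w) g`. Since `wᵀ M w - (gᵀ w)² = wᵀ B w = qᵀ w < 0` and `M`
is positive semidefinite, `gᵀ w ≠ 0`. This makes the positive semidefinite `A` nonsingular: if
`A x = 0`, then pairing `B⁻¹ A x = 0` with `q` and with `g` gives `gᵀ x = 0` and `qᵀ x = 0`, so
`B x = 0`. Finally `A⁻¹ g = w / (gᵀ w)`, which pairs with `g` to `1`.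
-/

section RankOneUpdates

variable {n K : Type*} [Fintype n] [DecidableEq n]

theorem add_vecMulVec_add_smul_vecMulVec_mulVec_inv_mulVec [CommRing K] {B : Matrix n n K}
    {θ : K} {g q u v : n → K} (hB : IsUnit B.det) (hθ : θ * (v ⬝ᵥ B⁻¹ *ᵥ q) = -1) :
    (B + vecMulVec g u + θ • vecMulVec q v) *ᵥ (B⁻¹ *ᵥ q) = (u ⬝ᵥ B⁻¹ *ᵥ q) • g := by
  have hBq : B *ᵥ (B⁻¹ *ᵥ q) = q := by rw [mulVec_mulVec, mul_nonsing_inv _ hB, one_mulVec]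
  rw [add_mulVec, add_mulVec, hBq, smul_mulVec, vecMulVec_mulVec, vecMulVec_mulVec,
    op_smul_eq_smul, op_smul_eq_smul, smul_smul, hθ]
  module

theorem isUnit_det_add_vecMulVec_add_smul_vecMulVec [Field K] {B : Matrix n n K}
    {θ : K} {g q u v : n → K} (hB : IsUnit B.det) (hθ : θ * (v ⬝ᵥ B⁻¹ *ᵥ q) = -1)
    (huq : u ⬝ᵥ B⁻¹ *ᵥ q ≠ 0) (hvg : v ⬝ᵥ B⁻¹ *ᵥ g ≠ 0) :
    IsUnit (B + vecMulVec g u + θ • vecMulVec q v).det := by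
  rw [isUnit_iff_ne_zero, ne_eq, ← exists_mulVec_eq_zero_iff]
  rintro ⟨x, hx0, hx⟩
  have hxB : x + (u ⬝ᵥ x) • (B⁻¹ *ᵥ g) + (θ * (v ⬝ᵥ x)) • (B⁻¹ *ᵥ q) = 0 := by
    simpa only [add_mulVec, smul_mulVec, vecMulVec_mulVec, op_smul_eq_smul, mulVec_add,
      mulVec_smul, mulVec_mulVec, nonsing_inv_mul _ hB, one_mulVec, smul_smul, mulVec_zero]
      using congrArg (B⁻¹ *ᵥ ·) hx
  have hpair (y : n → K) :
      y ⬝ᵥ x + (u ⬝ᵥ x) * (y ⬝ᵥ B⁻¹ *ᵥ g) + θ * (v ⬝ᵥ x) * (y ⬝ᵥ B⁻¹ *ᵥ q) = 0 := by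
    simpa only [dotProduct_add, dotProduct_smul, smul_eq_mul, dotProduct_zero]
      using congrArg (y ⬝ᵥ ·) hxB
  have hux : u ⬝ᵥ x = 0 := by
    have : (u ⬝ᵥ x) * (v ⬝ᵥ B⁻¹ *ᵥ g) = 0 := by
      linear_combination hpair v - (v ⬝ᵥ x) * hθ
    exact (mul_eq_zero.1 this).resolve_right hvg
  have hvx : θ * (v ⬝ᵥ x) = 0 := by
    have : θ * (v ⬝ᵥ x) * (u ⬝ᵥ B⁻¹ *ᵥ q) = 0 := by
      simpa only [hux, zero_mul, zero_add] using hpair u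
    exact (mul_eq_zero.1 this).resolve_right huq
  exact hx0 (by simpa only [hux, hvx, zero_smul, add_zero] using hxB)

theorem dotProduct_inv_mulVec_eq_one [CommRing K] [IsDomain K] {A : Matrix n n K}
    {g u w : n → K} (hA : IsUnit A.det) (hAw : A *ᵥ w = (u ⬝ᵥ w) • g) (huw : u ⬝ᵥ w ≠ 0) :
    u ⬝ᵥ A⁻¹ *ᵥ g = 1 := by
  have hw : w = (u ⬝ᵥ w) • (A⁻¹ *ᵥ g) := by
    rw [← mulVec_smul, ← hAw, mulVec_mulVec, nonsing_inv_mul _ hA, one_mulVec]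
  refine mul_left_cancel₀ huw ?_
  rw [mul_one, ← smul_eq_mul, ← dotProduct_smul, ← hw]

end RankOneUpdates

section Hermitian

variable {n R : Type*} [Fintype n]

theorem star_dotProduct_mulVec_eq_star_of_isHermitian [CommSemiring R] [StarRing R]
    {A : Matrix n n R} (hA : A.IsHermitian) (x y : n → R) :
    star x ⬝ᵥ A *ᵥ y = star (star y ⬝ᵥ A *ᵥ x) := by
  rw [← star_dotProduct, star_mulVec, hA.eq, dotProduct_mulVec]

theorem star_dotProduct_ne_zero_of_sub_vecMulVec_neg [Ring R] [PartialOrder R] [StarRing R]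
    {M : Matrix n n R} {g w : n → R} (hM : M.PosSemidef)
    (hw : star w ⬝ᵥ (M - vecMulVec g (star g)) *ᵥ w < 0) : star g ⬝ᵥ w ≠ 0 := by
  intro hgw
  rw [sub_mulVec, vecMulVec_mulVec, hgw, MulOpposite.op_zero, zero_smul, sub_zero] at hw
  exact hw.not_ge (hM.dotProduct_mulVec_nonneg w)

variable [DecidableEq n] [CommRing R]

-- A singular matrix has the junk inverse `0`.
theorem isUnit_det_of_dotProduct_inv_mulVec_ne_zero {A : Matrix n n R} {x y : n → R}
    (h : x ⬝ᵥ A⁻¹ *ᵥ y ≠ 0) : IsUnit A.det := by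
  contrapose! h
  rw [nonsing_inv_apply_not_isUnit _ h, zero_mulVec, dotProduct_zero]

theorem star_dotProduct_mulVec_inv_mulVec [StarRing R] {A : Matrix n n R}
    (hA : A.IsHermitian) (hdet : IsUnit A.det) (x : n → R) :
    star (A⁻¹ *ᵥ x) ⬝ᵥ A *ᵥ (A⁻¹ *ᵥ x) = star x ⬝ᵥ A⁻¹ *ᵥ x := by
  rw [mulVec_mulVec, mul_nonsing_inv _ hdet, one_mulVec, star_dotProduct,
    ← star_dotProduct_mulVec_eq_star_of_isHermitian hA.inv]

end Hermitian

open scoped ComplexOrder in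
theorem stmt9_general {n 𝕜 : Type*} [Fintype n] [DecidableEq n] [RCLike 𝕜] {M : Matrix n n 𝕜}
    {g q : n → 𝕜} (hM : M.PosSemidef)
    (hneg : star q ⬝ᵥ (M - vecMulVec g (star g))⁻¹ *ᵥ q < 0) :
    let θ : 𝕜 := -1 / (star q ⬝ᵥ (M - vecMulVec g (star g))⁻¹ *ᵥ q)
    let A : Matrix n n 𝕜 := M + θ • vecMulVec q (star q)
    0 < θ ∧ A.PosDef ∧ IsUnit A.det ∧ star g ⬝ᵥ A⁻¹ *ᵥ g = 1 := by
  intro θ A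
  set B := M - vecMulVec g (star g) with hBdef
  have hθ : 0 < θ := div_pos_of_neg_of_neg (by simp) hneg
  have hθq : θ * (star q ⬝ᵥ B⁻¹ *ᵥ q) = -1 := div_mul_cancel₀ _ hneg.ne
  have hB : IsUnit B.det := isUnit_det_of_dotProduct_inv_mulVec_ne_zero hneg.ne
  have hBherm : B.IsHermitian :=
    hM.isHermitian.sub (posSemidef_vecMulVec_self_star g).isHermitian
  have hgw : star g ⬝ᵥ B⁻¹ *ᵥ q ≠ 0 := star_dotProduct_ne_zero_of_sub_vecMulVec_neg hM
    ((star_dotProduct_mulVec_inv_mulVec hBherm hB q).trans_lt hneg)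
  have hqg : star q ⬝ᵥ B⁻¹ *ᵥ g ≠ 0 := by
    rwa [star_dotProduct_mulVec_eq_star_of_isHermitian hBherm.inv, star_ne_zero]
  have hA : A = B + vecMulVec g (star g) + θ • vecMulVec q (star q) := by
    rw [hBdef, sub_add_cancel]
  have hAdet : IsUnit A.det := hA ▸ isUnit_det_add_vecMulVec_add_smul_vecMulVec hB hθq hgw hqg
  have hApsd : A.PosSemidef := hM.add ((posSemidef_vecMulVec_self_star q).smul hθ.le)
  have hAw : A *ᵥ (B⁻¹ *ᵥ q) = (star g ⬝ᵥ B⁻¹ *ᵥ q) • g :=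
    hA ▸ add_vecMulVec_add_smul_vecMulVec_mulVec_inv_mulVec hB hθq
  exact ⟨hθ, hApsd.posDef_iff_det_ne_zero.2 hAdet.ne_zero, hAdet,
    dotProduct_inv_mulVec_eq_one hAdet hAw hgw⟩

/-- Let `H` be invertible 2×2 and `g` with `gᵀ(HᵀH)⁻¹g > 1` (so `HᵀH − g gᵀ` is
invertible). If `q⊥ ≠ 0` satisfies `(q⊥)ᵀ(HᵀH − g gᵀ)⁻¹q⊥ < 0` and
`θ = −1/((q⊥)ᵀ(HᵀH − g gᵀ)⁻¹q⊥) > 0`, then `A = HᵀH + θ q⊥(q⊥)ᵀ` is symmetric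
positive definite, hence invertible, and `gᵀ A⁻¹ g = 1`. -/
theorem stmt9 (H : Matrix (Fin 2) (Fin 2) ℝ) (g qp : Fin 2 → ℝ)
    (hH : IsUnit H.det) (hg : 1 < g ⬝ᵥ (Hᵀ * H)⁻¹.mulVec g)
    (hqp : qp ≠ 0)
    (hneg : qp ⬝ᵥ (Hᵀ * H - vecMulVec g g)⁻¹.mulVec qp < 0) :
    let θ : ℝ := -1 / (qp ⬝ᵥ (Hᵀ * H - vecMulVec g g)⁻¹.mulVec qp)
    let A : Matrix (Fin 2) (Fin 2) ℝ := Hᵀ * H + θ • vecMulVec qp qp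
    0 < θ ∧ A.PosDef ∧ IsUnit A.det ∧ g ⬝ᵥ A⁻¹.mulVec g = 1 := by
  simpa only [conjTranspose_eq_transpose_of_trivial, star_trivial] using
    stmt9_general (posSemidef_conjTranspose_mul_self H) (by simpa using hneg)
end

section
/- Let H be an invertible 2×2 real matrix, g ∈ ℝ² with gᵀ(HᵀH)⁻¹g > 1, and P > 0. Let λ₁ be the largest eigenvalue of (I + P·g gᵀ)^{-1/2}(I + P·HᵀH)(I + P·g gᵀ)^{-1/2}. Then the maximum over all 2×2 positive semidefinite matrices S with tr(S) ≤ P of the quantity (1/2)·log det(I + H S Hᵀ) − (1/2)·log(1 + gᵀ S g) equals (1/2)·log λ₁, and it is attained by the rank-one matrix S = P·q_a q_aᵀ, where q_a is a unit vector satisfying (I + P·g gᵀ)⁻¹(I + P·HᵀH) q_a = λ₁ q_a. -/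
open Matrix

/-!
Write `W = HᵀH` and `M = λ₁ (I + P g gᵀ) - (I + P W)`. Maximality of `λ₁` makes `M` positive
semidefinite, and `q_a` is a nonzero vector of its kernel, so `det M = 0`. In dimension two,
`P (λ₁ (1 + gᵀ S g) - det (I + H S Hᵀ)) = tr (M S) + (λ₁ - 1) (P - tr S) - P det W det S`,
which vanishes at `S = P q_a q_aᵀ`. For the upper bound, `λ₁ ≥ 1` because `M` is nonnegative at a
vector orthogonal to `g`, and it remains to see that `P det W det S ≤ tr (M S)`. Expanding
`det M = 0`, using non-degradedness and dividing by `λ₁ - 1` gives `P² det W ≤ tr M`; if `λ₁ = 1`,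
then `W` is singular and this bound is trivial. Finally, Cayley–Hamilton for `S` gives
`det S · tr M ≤ tr S · tr (M S) ≤ P tr (M S)`.
-/

section LinearAlgebra

open scoped MatrixOrder ComplexOrder in
lemma trace_mul_nonneg_of_posSemidef {n 𝕜 : Type*} [Fintype n] [RCLike 𝕜] {A B : Matrix n n 𝕜}
    (hA : A.PosSemidef) (hB : B.PosSemidef) : 0 ≤ (A * B).trace := by
  classical
  obtain ⟨C, rfl⟩ := CStarAlgebra.nonneg_iff_eq_star_mul_self.1 hA.nonneg
  rw [mul_assoc, trace_mul_comm]
  exact (hB.mul_mul_conjTranspose_same C).trace_nonneg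

variable {n : Type*} [Fintype n] [DecidableEq n]

lemma mem_spectrum_iff_exists_mulVec_eq_smul {K : Type*} [Field K] {A : Matrix n n K} {μ : K} :
    μ ∈ spectrum K A ↔ ∃ v ≠ 0, A *ᵥ v = μ • v := by
  rw [spectrum.mem_iff, isUnit_iff_isUnit_det, isUnit_iff_ne_zero, not_ne_iff,
    ← exists_mulVec_eq_zero_iff]
  simp only [sub_mulVec, Algebra.algebraMap_eq_smul_one, smul_mulVec, one_mulVec, sub_eq_zero,
    eq_comm]

open scoped MatrixOrder in
lemma posSemidef_smul_mul_self_sub_of_mem_upperBounds {A R : Matrix n n ℝ} {l : ℝ}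
    (hA : A.IsHermitian) (hR : R.PosDef)
    (hl : l ∈ upperBounds {μ : ℝ | ∃ v : n → ℝ, v ≠ 0 ∧ (R⁻¹ * A * R⁻¹) *ᵥ v = μ • v}) :
    (l • (R * R) - A).PosSemidef := by
  have hdet : IsUnit R.det := hR.det_pos.ne'.isUnit
  have hsymm : (R⁻¹ * A * R⁻¹).IsHermitian := by
    simpa only [hR.isHermitian.inv.eq] using isHermitian_conjTranspose_mul_mul R⁻¹ hA
  have hle : R⁻¹ * A * R⁻¹ ≤ algebraMap ℝ (Matrix n n ℝ) l :=
    le_algebraMap_of_spectrum_le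
      (fun μ hμ => hl (mem_spectrum_iff_exists_mulVec_eq_smul.1 hμ)) hsymm
  have hconj := (le_iff.1 hle).conjTranspose_mul_mul_same R
  rwa [hR.isHermitian.eq, mul_sub, sub_mul, Algebra.algebraMap_eq_smul_one, mul_smul_comm, mul_one,
    smul_mul_assoc, mul_assoc R⁻¹, mul_nonsing_inv_cancel_left _ _ hdet,
    nonsing_inv_mul_cancel_right _ _ hdet] at hconj

lemma smul_sub_mulVec_eq_zero_of_inv_mul_mulVec_eq {R : Type*} [CommRing R] {A B : Matrix n n R}
    {v : n → R} {l : R} (hB : IsUnit B.det) (hv : (B⁻¹ * A) *ᵥ v = l • v) :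
    (l • B - A) *ᵥ v = 0 := by
  rw [sub_mulVec, smul_mulVec, ← mulVec_smul, ← hv, mulVec_mulVec,
    mul_nonsing_inv_cancel_left _ _ hB, sub_self]

lemma det_transpose_mul_self_pos_s14 {R : Type*} [CommRing R] [LinearOrder R] [IsStrictOrderedRing R]
    {H : Matrix n n R} (hH : H.det ≠ 0) : 0 < (Hᵀ * H).det := by
  simpa only [det_mul, det_transpose] using mul_self_pos.2 hH

lemma det_le_dotProduct_adjugate_mulVec_iff {K : Type*} [Field K] [LinearOrder K]
    [IsStrictOrderedRing K] {W : Matrix n n K} (hW : 0 < W.det) (g : n → K) :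
    W.det ≤ g ⬝ᵥ W.adjugate *ᵥ g ↔ 1 ≤ g ⬝ᵥ W⁻¹ *ᵥ g := by
  rw [inv_def, Ring.inverse_eq_inv', smul_mulVec, dotProduct_smul, smul_eq_mul, inv_mul_eq_div,
    one_le_div hW]

end LinearAlgebra

section FinTwo

variable {R : Type*} [CommRing R]

lemma det_one_add_fin_two (A : Matrix (Fin 2) (Fin 2) R) : (1 + A).det = 1 + A.trace + A.det := by
  simp only [det_fin_two, trace_fin_two, Matrix.add_apply, one_apply_eq, one_apply_ne, ne_eq,
    zero_ne_one, one_ne_zero, not_false_eq_true, zero_add]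
  ring

lemma trace_mul_trace_mul_fin_two (A S : Matrix (Fin 2) (Fin 2) R) :
    S.trace * (A * S).trace = (S * A * S).trace + S.det * A.trace := by
  simp only [det_fin_two, trace_fin_two, mul_apply, Fin.sum_univ_two]
  ring

lemma det_one_add_mul_mul_transpose_fin_two {m : Type*} [Fintype m] [DecidableEq m]
    (H : Matrix m (Fin 2) R) (S : Matrix (Fin 2) (Fin 2) R) :
    (1 + H * S * Hᵀ).det = 1 + (Hᵀ * H * S).trace + (Hᵀ * H).det * S.det := by
  rw [Matrix.mul_assoc, det_one_add_mul_comm, det_one_add_fin_two, Matrix.mul_assoc S,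
    trace_mul_comm, det_mul, mul_comm S.det]

lemma det_mul_trace_le_trace_mul_trace_mul [PartialOrder R] [StarRing R] [IsOrderedAddMonoid R]
    {A S : Matrix (Fin 2) (Fin 2) R} (hA : A.PosSemidef) (hS : S.IsHermitian) :
    S.det * A.trace ≤ S.trace * (A * S).trace := by
  have hSAS := (hA.conjTranspose_mul_mul_same S).trace_nonneg
  rw [hS.eq] at hSAS
  rw [trace_mul_trace_mul_fin_two]
  exact le_add_of_nonneg_left hSAS

lemma mul_mul_det_le_trace_mul_of_sq_mul_le_trace {A S : Matrix (Fin 2) (Fin 2) ℝ} {P c : ℝ}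
    (hP : 0 < P) (hA : A.PosSemidef) (hcA : P ^ 2 * c ≤ A.trace) (hS : S.PosSemidef)
    (hSP : S.trace ≤ P) : P * (c * S.det) ≤ (A * S).trace := by
  refine le_of_mul_le_mul_left ?_ hP
  calc P * (P * (c * S.det)) = S.det * (P ^ 2 * c) := by ring
    _ ≤ S.det * A.trace := mul_le_mul_of_nonneg_left hcA hS.det_nonneg
    _ ≤ S.trace * (A * S).trace := det_mul_trace_le_trace_mul_trace_mul hA hS.isHermitian
    _ ≤ P * (A * S).trace :=
      mul_le_mul_of_nonneg_right hSP (trace_mul_nonneg_of_posSemidef hA hS)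

end FinTwo

/-- The matrix pencil `l B - A`, where `A = I + P W` and `B = I + P g gᵀ` are the received
covariances of the legitimate channel with Gram matrix `W = HᵀH` and of the eavesdropper's channel
`g` under isotropic signalling. -/
def wiretapPencil {n R : Type*} [DecidableEq n] [CommRing R] (W : Matrix n n R) (g : n → R)
    (P l : R) : Matrix n n R :=
  l • (1 + P • vecMulVec g g) - (1 + P • W)

section Pencil

variable {n R : Type*} [Fintype n] [DecidableEq n] [CommRing R]

lemma trace_wiretapPencil_mul (W S : Matrix n n R) (g : n → R) (P l : R) :
    (wiretapPencil W g P l * S).trace =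
      (l - 1) * S.trace + P * (l * (g ⬝ᵥ S *ᵥ g) - (W * S).trace) := by
  simp only [wiretapPencil, sub_mul, add_mul, smul_mul_assoc, one_mul, vecMulVec_mul, trace_sub,
    trace_smul, trace_add, trace_vecMulVec, smul_eq_mul, dotProduct_mulVec,
    dotProduct_comm g (g ᵥ* S)]
  ring

lemma dotProduct_wiretapPencil_mulVec (W : Matrix n n R) (g w : n → R) (P l : R) :
    w ⬝ᵥ wiretapPencil W g P l *ᵥ w =
      (l - 1) * (w ⬝ᵥ w) + P * (l * (w ⬝ᵥ g) ^ 2 - w ⬝ᵥ W *ᵥ w) := by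
  simp only [wiretapPencil, sub_mulVec, add_mulVec, smul_mulVec, one_mulVec, vecMulVec_mulVec,
    op_smul_eq_smul, dotProduct_sub, dotProduct_add, dotProduct_smul, smul_eq_mul,
    dotProduct_comm g w]
  ring

lemma det_wiretapPencil_fin_two (W : Matrix (Fin 2) (Fin 2) R) (g : Fin 2 → R) (P l : R) :
    (wiretapPencil W g P l).det =
      (l - 1) * ((wiretapPencil W g P l).trace - (l - 1)) -
        P ^ 2 * (l * (g ⬝ᵥ W.adjugate *ᵥ g) - W.det) := by
  simp only [wiretapPencil, det_fin_two, trace_fin_two, adjugate_fin_two, vecMulVec_apply,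
    dotProduct, mulVec, Fin.sum_univ_two, Matrix.sub_apply, Matrix.add_apply, Matrix.smul_apply,
    smul_eq_mul, one_apply_eq, one_apply_ne, ne_eq, zero_ne_one, one_ne_zero, not_false_eq_true,
    of_apply, cons_val', cons_val_fin_one, cons_val_zero, cons_val_one]
  ring

lemma mul_one_add_sub_det_eq_trace_wiretapPencil_mul {m : Type*} [Fintype m] [DecidableEq m]
    (H : Matrix m (Fin 2) R) (S : Matrix (Fin 2) (Fin 2) R) (g : Fin 2 → R) (P l : R) :
    P * (l * (1 + g ⬝ᵥ S *ᵥ g) - (1 + H * S * Hᵀ).det) =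
      (wiretapPencil (Hᵀ * H) g P l * S).trace + (l - 1) * (P - S.trace) -
        P * ((Hᵀ * H).det * S.det) := by
  rw [trace_wiretapPencil_mul, det_one_add_mul_mul_transpose_fin_two]
  ring

lemma det_one_add_mul_smul_vecMulVec_mul_transpose [IsDomain R] {m : Type*}
    [Fintype m] [DecidableEq m] {H : Matrix m (Fin 2) R} {g q : Fin 2 → R} {P l : R} (hP : P ≠ 0)
    (hq : q ⬝ᵥ q = 1) (hMq : wiretapPencil (Hᵀ * H) g P l *ᵥ q = 0) :
    (1 + H * (P • vecMulVec q q) * Hᵀ).det = l * (1 + g ⬝ᵥ (P • vecMulVec q q) *ᵥ g) := by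
  have hgap := mul_one_add_sub_det_eq_trace_wiretapPencil_mul H (P • vecMulVec q q) g P l
  rw [mul_smul_comm, mul_vecMulVec, hMq, zero_vecMulVec, smul_zero, trace_zero, trace_smul,
    trace_vecMulVec, hq, smul_eq_mul, mul_one, sub_self, mul_zero, det_smul, det_vecMulVec,
    mul_zero, mul_zero, mul_zero, add_zero, sub_zero] at hgap
  exact (sub_eq_zero.1 ((mul_eq_zero.1 hgap).resolve_left hP)).symm

end Pencil

section PosSemidefPencil

variable {n : Type*} [DecidableEq n] [Nontrivial n] {W : Matrix n n ℝ} {g : n → ℝ} {P l : ℝ}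

lemma one_le_of_posSemidef_wiretapPencil [Finite n] (hP : 0 ≤ P) (hW : W.PosSemidef)
    (hM : (wiretapPencil W g P l).PosSemidef) : 1 ≤ l := by
  cases nonempty_fintype n
  obtain ⟨w, hw, hwg⟩ := exists_ne_zero_dotProduct_eq_zero g
  have hform : 0 ≤ w ⬝ᵥ wiretapPencil W g P l *ᵥ w := hM.dotProduct_mulVec_nonneg w
  have hPW : 0 ≤ P * (w ⬝ᵥ W *ᵥ w) := mul_nonneg hP (hW.dotProduct_mulVec_nonneg w)
  have hww : 0 < w ⬝ᵥ w := dotProduct_star_self_pos_iff.2 hw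
  rw [dotProduct_wiretapPencil_mulVec, hwg] at hform
  exact sub_nonneg.1 (nonneg_of_mul_nonneg_left (by linarith) hww)

lemma det_eq_zero_of_posSemidef_wiretapPencil_one [Fintype n] (hP : 0 < P)
    (hW : W.PosSemidef) (hM : (wiretapPencil W g P 1).PosSemidef) : W.det = 0 := by
  obtain ⟨w, hw, hwg⟩ := exists_ne_zero_dotProduct_eq_zero g
  have hform : 0 ≤ w ⬝ᵥ wiretapPencil W g P 1 *ᵥ w := hM.dotProduct_mulVec_nonneg w
  rw [dotProduct_wiretapPencil_mulVec, hwg] at hform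
  have hPW : P * (w ⬝ᵥ W *ᵥ w) ≤ 0 := by linarith
  have hWw : w ⬝ᵥ W *ᵥ w = 0 :=
    (nonpos_of_mul_nonpos_right hPW hP).antisymm (hW.dotProduct_mulVec_nonneg w)
  exact exists_mulVec_eq_zero_iff.1 ⟨w, hw, (hW.dotProduct_mulVec_zero_iff w).1 hWw⟩

end PosSemidefPencil

section WiretapBound

variable {W S : Matrix (Fin 2) (Fin 2) ℝ} {g : Fin 2 → ℝ} {P l : ℝ}

lemma sq_mul_det_le_trace_wiretapPencil (hP : 0 < P) (hW : W.PosSemidef)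
    (hM : (wiretapPencil W g P l).PosSemidef) (hdet : (wiretapPencil W g P l).det = 0)
    (hg : W.det ≤ g ⬝ᵥ W.adjugate *ᵥ g) :
    P ^ 2 * W.det ≤ (wiretapPencil W g P l).trace := by
  obtain rfl | hl := (one_le_of_posSemidef_wiretapPencil hP.le hW hM).eq_or_lt
  · rw [det_eq_zero_of_posSemidef_wiretapPencil_one hP hW hM, mul_zero]
    exact hM.trace_nonneg
  · have hexpand := hdet
    rw [det_wiretapPencil_fin_two] at hexpand
    have hscaled : (l - 1) * (P ^ 2 * W.det) ≤
        (l - 1) * ((wiretapPencil W g P l).trace - (l - 1)) := by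
      calc (l - 1) * (P ^ 2 * W.det) = P ^ 2 * (l * W.det - W.det) := by ring
        _ ≤ P ^ 2 * (l * (g ⬝ᵥ W.adjugate *ᵥ g) - W.det) := by gcongr
        _ = (l - 1) * ((wiretapPencil W g P l).trace - (l - 1)) := by linarith
    linarith [le_of_mul_le_mul_left hscaled (sub_pos.2 hl)]

variable {m : Type*} [Fintype m] [DecidableEq m] {H : Matrix m (Fin 2) ℝ}

lemma det_one_add_mul_mul_transpose_le (hP : 0 < P)
    (hM : (wiretapPencil (Hᵀ * H) g P l).PosSemidef)
    (hdet : (wiretapPencil (Hᵀ * H) g P l).det = 0)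
    (hg : (Hᵀ * H).det ≤ g ⬝ᵥ (Hᵀ * H).adjugate *ᵥ g) (hS : S.PosSemidef) (hSP : S.trace ≤ P) :
    (1 + H * S * Hᵀ).det ≤ l * (1 + g ⬝ᵥ S *ᵥ g) := by
  have hW : (Hᵀ * H).PosSemidef := posSemidef_conjTranspose_mul_self H
  have htr := sq_mul_det_le_trace_wiretapPencil hP hW hM hdet hg
  have hMS := mul_mul_det_le_trace_mul_of_sq_mul_le_trace hP hM htr hS hSP
  have hl := one_le_of_posSemidef_wiretapPencil hP.le hW hM
  have hslack : 0 ≤ (l - 1) * (P - S.trace) := mul_nonneg (sub_nonneg.2 hl) (sub_nonneg.2 hSP)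
  rw [← sub_nonneg]
  refine nonneg_of_mul_nonneg_right ?_ hP
  rw [mul_one_add_sub_det_eq_trace_wiretapPencil_mul]
  linarith

end WiretapBound

/-- The secrecy rate of Gaussian signalling with covariance `S` over the channel `H` towards the
legitimate receiver and `g` towards a single-antenna eavesdropper, both with unit noise. -/
noncomputable def secrecyRate {m n : Type*} [Fintype m] [DecidableEq m] [Fintype n]
    (H : Matrix m n ℝ) (g : n → ℝ) (S : Matrix n n ℝ) : ℝ :=
  (1 / 2) * Real.log ((1 + H * S * Hᵀ).det) - (1 / 2) * Real.log (1 + g ⬝ᵥ S *ᵥ g)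

section SecrecyRate

variable {m n : Type*} [Fintype m] [DecidableEq m] [Fintype n]
  {H : Matrix m n ℝ} {g : n → ℝ} {S : Matrix n n ℝ} {l : ℝ}

lemma det_one_add_mul_mul_transpose_pos (hS : S.PosSemidef) : 0 < (1 + H * S * Hᵀ).det :=
  (PosDef.one.add_posSemidef (hS.mul_mul_conjTranspose_same H)).det_pos

lemma one_add_dotProduct_mulVec_pos (hS : S.PosSemidef) : 0 < 1 + g ⬝ᵥ S *ᵥ g :=
  add_pos_of_pos_of_nonneg one_pos (hS.dotProduct_mulVec_nonneg g)

lemma secrecyRate_eq_half_mul_log_div (hS : S.PosSemidef) :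
    secrecyRate H g S = (1 / 2) * Real.log ((1 + H * S * Hᵀ).det / (1 + g ⬝ᵥ S *ᵥ g)) := by
  rw [Real.log_div (det_one_add_mul_mul_transpose_pos hS).ne'
    (one_add_dotProduct_mulVec_pos hS).ne', mul_sub, secrecyRate]

lemma secrecyRate_le_half_mul_log (hS : S.PosSemidef)
    (h : (1 + H * S * Hᵀ).det ≤ l * (1 + g ⬝ᵥ S *ᵥ g)) :
    secrecyRate H g S ≤ (1 / 2) * Real.log l := by
  have hpos := one_add_dotProduct_mulVec_pos (g := g) hS
  rw [secrecyRate_eq_half_mul_log_div hS]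
  gcongr
  · exact div_pos (det_one_add_mul_mul_transpose_pos hS) hpos
  · exact (div_le_iff₀ hpos).2 h

lemma secrecyRate_eq_half_mul_log (hS : S.PosSemidef)
    (h : (1 + H * S * Hᵀ).det = l * (1 + g ⬝ᵥ S *ᵥ g)) :
    secrecyRate H g S = (1 / 2) * Real.log l := by
  rw [secrecyRate_eq_half_mul_log_div hS, h,
    mul_div_cancel_right₀ _ (one_add_dotProduct_mulVec_pos hS).ne']

end SecrecyRate

/-- The adjugate form of `1 ≤ gᵀ(HᵀH)⁻¹g` keeps its meaning when `HᵀH` is singular. -/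
theorem stmt14_general {m : Type*} [Fintype m] [DecidableEq m] (H : Matrix m (Fin 2) ℝ)
    (R : Matrix (Fin 2) (Fin 2) ℝ) (g qa : Fin 2 → ℝ) (P lam1 : ℝ)
    (hg : (Hᵀ * H).det ≤ g ⬝ᵥ (Hᵀ * H).adjugate *ᵥ g) (hP : 0 < P)
    (hR : R.PosDef) (hRB : R * R = 1 + P • vecMulVec g g)
    (hlam : IsGreatest {μ : ℝ | ∃ v : Fin 2 → ℝ, v ≠ 0 ∧
      (R⁻¹ * (1 + P • (Hᵀ * H)) * R⁻¹) *ᵥ v = μ • v} lam1)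
    (hqa : qa ⬝ᵥ qa = 1)
    (hqae : ((1 + P • vecMulVec g g)⁻¹ * (1 + P • (Hᵀ * H))) *ᵥ qa = lam1 • qa) :
    IsGreatest {r : ℝ | ∃ S : Matrix (Fin 2) (Fin 2) ℝ,
        S.PosSemidef ∧ S.trace ≤ P ∧ r = secrecyRate H g S} ((1 / 2) * Real.log lam1)
      ∧ secrecyRate H g (P • vecMulVec qa qa) = (1 / 2) * Real.log lam1 := by
  have hA : (1 + P • (Hᵀ * H)).PosSemidef :=
    PosSemidef.one.add ((posSemidef_conjTranspose_mul_self H).smul hP.le)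
  have hB : IsUnit (1 + P • vecMulVec g g).det := by
    rw [← hRB, det_mul]
    exact (mul_pos hR.det_pos hR.det_pos).ne'.isUnit
  have hM : (wiretapPencil (Hᵀ * H) g P lam1).PosSemidef := by
    simpa only [wiretapPencil, hRB] using
      posSemidef_smul_mul_self_sub_of_mem_upperBounds hA.isHermitian hR hlam.2
  have hMq : wiretapPencil (Hᵀ * H) g P lam1 *ᵥ qa = 0 :=
    smul_sub_mulVec_eq_zero_of_inv_mul_mulVec_eq hB hqae
  have hqa_ne : qa ≠ 0 := fun h => by simp [h] at hqa
  have hdet := exists_mulVec_eq_zero_iff.1 ⟨qa, hqa_ne, hMq⟩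
  have hSq : (P • vecMulVec qa qa).PosSemidef := (posSemidef_vecMulVec_self_star qa).smul hP.le
  have hSq_trace : (P • vecMulVec qa qa).trace = P := by
    rw [trace_smul, trace_vecMulVec, hqa, smul_eq_mul, mul_one]
  have hrate := secrecyRate_eq_half_mul_log hSq
    (det_one_add_mul_smul_vecMulVec_mul_transpose hP.ne' hqa hMq)
  refine ⟨⟨⟨_, hSq, hSq_trace.le, hrate.symm⟩, ?_⟩, hrate⟩
  rintro _ ⟨S, hS, hSP, rfl⟩
  exact secrecyRate_le_half_mul_log hS (det_one_add_mul_mul_transpose_le hP hM hdet hg hS hSP)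

/-- Let `H` be invertible 2×2, `g` with `gᵀ(HᵀH)⁻¹g > 1`, `P > 0`, let `R` be the
symmetric positive definite square root of `B = I + P g gᵀ`, and let `λ₁` be the
largest eigenvalue of `R⁻¹(I + P HᵀH)R⁻¹`. Then the maximum over positive
semidefinite `S` with `tr S ≤ P` of
`(1/2) log det(I + H S Hᵀ) − (1/2) log(1 + gᵀ S g)` equals `(1/2) log λ₁`, and is
attained by the rank-one matrix `S = P q_a q_aᵀ`, where `q_a` is a unit vector
with `B⁻¹(I + P HᵀH) q_a = λ₁ q_a`. -/
theorem stmt14 (H R : Matrix (Fin 2) (Fin 2) ℝ) (g qa : Fin 2 → ℝ) (P lam1 : ℝ)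
    (hH : IsUnit H.det) (hg : 1 < g ⬝ᵥ (Hᵀ * H)⁻¹.mulVec g) (hP : 0 < P)
    (hR : R.PosDef) (hRB : R * R = 1 + P • vecMulVec g g)
    (hlam : IsGreatest {μ : ℝ | ∃ v : Fin 2 → ℝ, v ≠ 0 ∧
      (R⁻¹ * (1 + P • (Hᵀ * H)) * R⁻¹).mulVec v = μ • v} lam1)
    (hqa : qa ⬝ᵥ qa = 1)
    (hqae : ((1 + P • vecMulVec g g)⁻¹ * (1 + P • (Hᵀ * H))).mulVec qa
      = lam1 • qa) :
    IsGreatest {r : ℝ | ∃ S : Matrix (Fin 2) (Fin 2) ℝ,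
        S.PosSemidef ∧ S.trace ≤ P ∧
        r = (1 / 2) * Real.log ((1 + H * S * Hᵀ).det)
          - (1 / 2) * Real.log (1 + g ⬝ᵥ S.mulVec g)}
      ((1 / 2) * Real.log lam1)
    ∧ (1 / 2) * Real.log ((1 + H * (P • vecMulVec qa qa) * Hᵀ).det)
        - (1 / 2) * Real.log (1 + g ⬝ᵥ (P • vecMulVec qa qa).mulVec g)
      = (1 / 2) * Real.log lam1 :=
  stmt14_general H R g qa P lam1 ((det_le_dotProduct_adjugate_mulVec_iff
    (det_transpose_mul_self_pos_s14 hH.ne_zero) g).2 hg.le) hP hR hRB hlam hqa hqae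
end
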